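/- arXiv:1910.02781 — 2 statements merged into one kernel-verified Lean document; each statement's English description precedes it below -/
import Mathlib

section
/- The third derivative of the reciprocal gamma function 1/Γ at the point 1 equals 2ζ(3) − (π²/2)γ + γ³, where ζ(3) is the value of the Riemann zeta function at 3. -/
/-!
Near `0` the Weierstrass product reads `1 / Γ(1 + z) = exp (γ z + L z)` with
`L z = ∑_{n ≥ 0} (log (1 + z / (n + 1)) - z / (n + 1))`; it follows from Euler's limit formula
for `Γ` (`inv_Gamma_one_add_eq_exp`). The series converges uniformly on the disc of radius `1 / 2`,
hence so do its derivatives of all orders (locally), and differentiating termwise at `0` gives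
`L' 0 = 0`, `L'' 0 = -ζ(2)`, `L''' 0 = 2 ζ(3)`. For `f = exp g` with `g 0 = 0`, one has
`f''' 0 = (g' 0) ^ 3 + 3 (g' 0) (g'' 0) + g''' 0` (`iteratedDeriv_three_of_eq_exp`), and `g' 0 = γ`,
`ζ(2) = π ^ 2 / 6` conclude.
-/

open Filter Topology

/-- The `n`-th term of the series for the logarithm of the Weierstrass product of `1 / Γ(1 + z)`,
indexed from `0`. -/
noncomputable def weierstrassLogTerm (n : ℕ) (z : ℂ) : ℂ :=
  Complex.log (1 + z / (n + 1)) - z / (n + 1)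

/-- The logarithm of `∏ (1 + z / n) exp (-z / n)` near `0`, i.e. that of
`exp (-γ z) / Γ(1 + z)`. -/
noncomputable def weierstrassLog (z : ℂ) : ℂ := ∑' n, weierstrassLogTerm n z

lemma iteratedDeriv_three_of_eq_exp {U : Set ℂ} (hU : IsOpen U) {a : ℂ} (ha : a ∈ U)
    {f g : ℂ → ℂ} (hg : DifferentiableOn ℂ g U) (hf : ∀ z ∈ U, f z = Complex.exp (g z))
    (hga : g a = 0) :
    iteratedDeriv 3 f a =
      deriv g a ^ 3 + 3 * deriv g a * deriv (deriv g) a + deriv (deriv (deriv g)) a := by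
  have hg1 : DifferentiableOn ℂ (deriv g) U := hg.deriv hU
  have hg2 : DifferentiableOn ℂ (deriv (deriv g)) U := hg1.deriv hU
  have d0 : ∀ z ∈ U, HasDerivAt g (deriv g z) z := fun z hz =>
    (hg.differentiableAt (hU.mem_nhds hz)).hasDerivAt
  have d1 : ∀ z ∈ U, HasDerivAt (deriv g) (deriv (deriv g) z) z := fun z hz =>
    (hg1.differentiableAt (hU.mem_nhds hz)).hasDerivAt
  have d2 : ∀ z ∈ U, HasDerivAt (deriv (deriv g)) (deriv (deriv (deriv g)) z) z := fun z hz =>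
    (hg2.differentiableAt (hU.mem_nhds hz)).hasDerivAt
  have f1 : ∀ z ∈ U, deriv f z = Complex.exp (g z) * deriv g z := fun z hz => by
    rw [Filter.EventuallyEq.deriv_eq (eventually_of_mem (hU.mem_nhds hz) hf)]
    exact (d0 z hz).cexp.deriv
  have f2 : ∀ z ∈ U, deriv (deriv f) z =
      Complex.exp (g z) * (deriv g z ^ 2 + deriv (deriv g) z) := fun z hz => by
    rw [Filter.EventuallyEq.deriv_eq (eventually_of_mem (hU.mem_nhds hz) f1)]
    refine ((d0 z hz).cexp.mul (d1 z hz)).deriv.trans ?_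
    ring
  rw [iteratedDeriv_succ, iteratedDeriv_succ, iteratedDeriv_one,
    Filter.EventuallyEq.deriv_eq (eventually_of_mem (hU.mem_nhds ha) f2)]
  refine ((d0 a ha).cexp.mul (((d1 a ha).pow 2).add (d2 a ha))).deriv.trans ?_
  simp only [hga, Complex.exp_zero, Pi.add_apply, Pi.pow_apply]
  push_cast
  ring

lemma one_add_div_mem_slitPlane (n : ℕ) {z : ℂ} (hz : z ∈ Metric.ball (0 : ℂ) (1 / 2)) :
    1 + z / ((n : ℂ) + 1) ∈ Complex.slitPlane := by
  apply Complex.mem_slitPlane_of_norm_lt_one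
  have hz' : ‖z‖ < 1 / 2 := by simpa using hz
  have h : ‖((n : ℂ) + 1)‖ = n + 1 := by
    exact_mod_cast Complex.norm_natCast (n + 1)
  rw [norm_div, h, div_lt_one (by positivity)]
  have : (0 : ℝ) ≤ n := n.cast_nonneg
  linarith

lemma natCast_add_one_add_ne_zero (n : ℕ) {z : ℂ} (hz : z ∈ Metric.ball (0 : ℂ) (1 / 2)) :
    (n : ℂ) + 1 + z ≠ 0 := by
  intro h
  have h0 : (n : ℂ) + 1 ≠ 0 := n.cast_add_one_ne_zero
  apply Complex.slitPlane_ne_zero (one_add_div_mem_slitPlane n hz)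
  field_simp
  simpa using h

lemma norm_weierstrassLogTerm_le (n : ℕ) {z : ℂ} (hz : z ∈ Metric.ball (0 : ℂ) (1 / 2)) :
    ‖weierstrassLogTerm n z‖ ≤ 1 / ((n : ℝ) + 1) ^ 2 := by
  have hz' : ‖z‖ < 1 / 2 := by simpa using hz
  have h : ‖((n : ℂ) + 1)‖ = n + 1 := by
    exact_mod_cast Complex.norm_natCast (n + 1)
  have hn : (0 : ℝ) ≤ n := n.cast_nonneg
  have hw : ‖z / ((n : ℂ) + 1)‖ ≤ 1 / 2 / (n + 1) := by
    rw [norm_div, h]; gcongr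
  have hw2 : 1 / 2 / ((n : ℝ) + 1) ≤ 1 / 2 := div_le_self (by norm_num) (by linarith)
  refine (Complex.norm_log_one_add_sub_self_le (by linarith)).trans ?_
  have hi : (1 - ‖z / ((n : ℂ) + 1)‖)⁻¹ ≤ 2 := by
    rw [inv_le_comm₀ (by linarith) (by norm_num)]; linarith
  have hi0 : 0 ≤ (1 - ‖z / ((n : ℂ) + 1)‖)⁻¹ := inv_nonneg.2 (by linarith)
  calc _ ≤ (1 / 2 / ((n : ℝ) + 1)) ^ 2 * 2 / 2 := by gcongr
    _ = 1 / 4 * (1 / ((n : ℝ) + 1) ^ 2) := by field_simp; norm_num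
    _ ≤ _ := by
      have : 0 ≤ 1 / ((n : ℝ) + 1) ^ 2 := by positivity
      linarith

lemma hasDerivAt_weierstrassLogTerm (n : ℕ) {z : ℂ} (hz : z ∈ Metric.ball (0 : ℂ) (1 / 2)) :
    HasDerivAt (weierstrassLogTerm n) (((n : ℂ) + 1 + z)⁻¹ - ((n : ℂ) + 1)⁻¹) z := by
  have h0 : (n : ℂ) + 1 ≠ 0 := n.cast_add_one_ne_zero
  have h1 := natCast_add_one_add_ne_zero n hz
  have hd : HasDerivAt (fun z : ℂ => z / ((n : ℂ) + 1)) (1 / ((n : ℂ) + 1)) z :=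
    (hasDerivAt_id z).div_const _
  refine (((hd.const_add 1).clog (one_add_div_mem_slitPlane n hz)).sub hd).congr_deriv ?_
  have h2 := Complex.slitPlane_ne_zero (one_add_div_mem_slitPlane n hz)
  field_simp

lemma hasDerivAt_inv_natCast_add_one_add (n : ℕ) {z : ℂ}
    (hz : z ∈ Metric.ball (0 : ℂ) (1 / 2)) :
    HasDerivAt (fun z : ℂ => ((n : ℂ) + 1 + z)⁻¹ - ((n : ℂ) + 1)⁻¹)
      (-1 / ((n : ℂ) + 1 + z) ^ 2) z :=
  ((((hasDerivAt_id z).const_add _).fun_inv (natCast_add_one_add_ne_zero n hz)).sub_const _)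

lemma hasDerivAt_neg_one_div_sq (n : ℕ) {z : ℂ} (hz : z ∈ Metric.ball (0 : ℂ) (1 / 2)) :
    HasDerivAt (fun z : ℂ => -1 / ((n : ℂ) + 1 + z) ^ 2) (2 / ((n : ℂ) + 1 + z) ^ 3) z := by
  have h1 := natCast_add_one_add_ne_zero n hz
  have := (hasDerivAt_const z (-1 : ℂ)).fun_div
    (((hasDerivAt_id z).const_add ((n : ℂ) + 1)).fun_pow 2) (pow_ne_zero 2 h1)
  refine this.congr_deriv ?_
  simp only [id]
  field_simp
  ring

lemma tendstoLocallyUniformlyOn_weierstrassLog :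
    TendstoLocallyUniformlyOn (fun N z => ∑ n ∈ Finset.range N, weierstrassLogTerm n z)
      weierstrassLog atTop (Metric.ball 0 (1 / 2)) := by
  refine (tendstoUniformlyOn_tsum_nat (u := fun n : ℕ => 1 / ((n : ℝ) + 1) ^ 2) ?_
    fun n z hz => norm_weierstrassLogTerm_le n hz).tendstoLocallyUniformlyOn
  exact_mod_cast (summable_nat_add_iff 1).2 (Real.summable_one_div_nat_pow.2 one_lt_two)

lemma differentiableOn_weierstrassLog :
    DifferentiableOn ℂ weierstrassLog (Metric.ball 0 (1 / 2)) := by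
  refine tendstoLocallyUniformlyOn_weierstrassLog.differentiableOn (.of_forall fun N => ?_)
    Metric.isOpen_ball
  exact fun z hz => (HasDerivAt.fun_sum fun n _ =>
    hasDerivAt_weierstrassLogTerm n hz).differentiableAt.differentiableWithinAt

/-- Locally uniform limits of partial sums of holomorphic functions may be differentiated
termwise. -/
lemma tendstoLocallyUniformlyOn_deriv_sum_range {U : Set ℂ} (hU : IsOpen U)
    {F F' : ℕ → ℂ → ℂ} {f : ℂ → ℂ}
    (h : TendstoLocallyUniformlyOn (fun N z => ∑ n ∈ Finset.range N, F n z) f atTop U)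
    (hF : ∀ n, ∀ z ∈ U, HasDerivAt (F n) (F' n z) z) :
    TendstoLocallyUniformlyOn (fun N z => ∑ n ∈ Finset.range N, F' n z) (deriv f) atTop U := by
  have hs : ∀ N, ∀ z ∈ U, HasDerivAt (fun z => ∑ n ∈ Finset.range N, F n z)
      (∑ n ∈ Finset.range N, F' n z) z := fun N z hz => HasDerivAt.fun_sum fun n _ => hF n z hz
  refine (h.deriv (.of_forall fun N z hz =>
    (hs N z hz).differentiableAt.differentiableWithinAt) hU).congr fun N z hz => ?_
  exact (hs N z hz).deriv

lemma tendsto_sum_inv_pow_riemannZeta {k : ℕ} (hk : 1 < k) :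
    Tendsto (fun N => ∑ n ∈ Finset.range N, 1 / ((n : ℂ) + 1) ^ k) atTop
      (𝓝 (riemannZeta k)) := by
  have hs : Summable fun n : ℕ => 1 / ((n : ℂ) + 1) ^ k := by
    have := (summable_nat_add_iff 1).2 (Complex.summable_one_div_nat_cpow (p := k) |>.2
      (by simpa using hk))
    simpa using this
  have := hs.hasSum.tendsto_sum_nat
  rwa [show ∑' n : ℕ, 1 / ((n : ℂ) + 1) ^ k = riemannZeta k by
    rw [zeta_eq_tsum_one_div_nat_add_one_cpow (by simpa using hk)]; simp] at this

lemma weierstrassLog_zero : weierstrassLog 0 = 0 := by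
  simp [weierstrassLog, weierstrassLogTerm]

lemma deriv_weierstrassLog_values :
    deriv weierstrassLog 0 = 0 ∧ deriv (deriv weierstrassLog) 0 = -riemannZeta 2 ∧
      deriv (deriv (deriv weierstrassLog)) 0 = 2 * riemannZeta 3 := by
  have h0 : (0 : ℂ) ∈ Metric.ball (0 : ℂ) (1 / 2) := by simp
  have t1 := tendstoLocallyUniformlyOn_deriv_sum_range Metric.isOpen_ball
    tendstoLocallyUniformlyOn_weierstrassLog
    fun n z hz => hasDerivAt_weierstrassLogTerm n hz
  have t2 := tendstoLocallyUniformlyOn_deriv_sum_range Metric.isOpen_ball t1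
    fun n z hz => hasDerivAt_inv_natCast_add_one_add n hz
  have t3 := tendstoLocallyUniformlyOn_deriv_sum_range Metric.isOpen_ball t2
    fun n z hz => hasDerivAt_neg_one_div_sq n hz
  refine ⟨tendsto_nhds_unique (t1.tendsto_at h0) ?_, tendsto_nhds_unique (t2.tendsto_at h0) ?_,
    tendsto_nhds_unique (t3.tendsto_at h0) ?_⟩
  · simp
  · refine (tendsto_sum_inv_pow_riemannZeta (k := 2) one_lt_two).neg.congr fun N => ?_
    simp [neg_div]
  · refine ((tendsto_sum_inv_pow_riemannZeta (k := 3) (by norm_num)).const_mul 2).congr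
      fun N => ?_
    simp [Finset.mul_sum, div_eq_mul_inv]

/-- The finite form of the Weierstrass product: Euler's approximation to `Γ`, times `z`. -/
lemma mul_GammaSeq_eq_exp {z : ℂ} (hz : z ∈ Metric.ball (0 : ℂ) (1 / 2)) (hz0 : z ≠ 0) {N : ℕ}
    (hN : N ≠ 0) :
    z * Complex.GammaSeq z N = Complex.exp (-((((harmonic N : ℝ) - Real.log N : ℝ) : ℂ) * z +
      ∑ n ∈ Finset.range N, weierstrassLogTerm n z)) := by
  have hexp : ∀ n : ℕ, Complex.exp (Complex.log (1 + z / ((n : ℂ) + 1))) =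
      (z + (n + 1 : ℕ)) / ((n + 1 : ℕ) : ℂ) := fun n => by
    have h0 : (n : ℂ) + 1 ≠ 0 := n.cast_add_one_ne_zero
    rw [Complex.exp_log (Complex.slitPlane_ne_zero (one_add_div_mem_slitPlane n hz))]
    push_cast
    field_simp
    ring
  have hH : ((harmonic N : ℝ) : ℂ) * z = ∑ n ∈ Finset.range N, z / ((n : ℂ) + 1) := by
    simp [harmonic, Finset.mul_sum, div_eq_mul_inv, mul_comm _ z]
  have hE : -((((harmonic N : ℝ) - Real.log N : ℝ) : ℂ) * z +
      ∑ n ∈ Finset.range N, weierstrassLogTerm n z) =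
      Complex.log N * z - ∑ n ∈ Finset.range N, Complex.log (1 + z / ((n : ℂ) + 1)) := by
    simp only [weierstrassLogTerm, Finset.sum_sub_distrib, ← hH]
    rw [Complex.ofReal_sub, Complex.ofReal_log N.cast_nonneg]
    push_cast
    ring
  rw [hE, Complex.exp_sub, Complex.exp_sum, Finset.prod_congr rfl fun n _ => hexp n,
    Finset.prod_div_distrib, ← Complex.cpow_def_of_ne_zero (by exact_mod_cast hN),
    Complex.GammaSeq, Finset.prod_range_succ', ← Nat.cast_prod, Finset.prod_range_add_one_eq_factorial]
  simp only [Nat.cast_zero, add_zero]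
  have hp : ∏ n ∈ Finset.range N, (z + (n + 1 : ℕ)) ≠ 0 := Finset.prod_ne_zero_iff.2 fun n _ => by
    have := natCast_add_one_add_ne_zero n hz
    push_cast
    rwa [add_comm]
  field_simp

lemma inv_Gamma_one_add_eq_exp {z : ℂ} (hz : z ∈ Metric.ball (0 : ℂ) (1 / 2)) :
    (Complex.Gamma (1 + z))⁻¹ =
      Complex.exp ((Real.eulerMascheroniConstant : ℂ) * z + weierstrassLog z) := by
  rcases eq_or_ne z 0 with rfl | hz0
  · simp [weierstrassLog_zero]
  have hlim : Tendsto (fun N : ℕ => z * Complex.GammaSeq z N) atTop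
      (𝓝 (Complex.exp (-((Real.eulerMascheroniConstant : ℂ) * z + weierstrassLog z)))) := by
    have hγ : Tendsto (fun N : ℕ => (((harmonic N : ℝ) - Real.log N : ℝ) : ℂ)) atTop
        (𝓝 (Real.eulerMascheroniConstant : ℂ)) :=
      (Complex.continuous_ofReal.tendsto _).comp Real.tendsto_harmonic_sub_log
    refine Tendsto.congr' ?_ (((hγ.mul_const z).add
      (tendstoLocallyUniformlyOn_weierstrassLog.tendsto_at hz)).neg.cexp)
    filter_upwards [eventually_ne_atTop 0] with N hN
    exact (mul_GammaSeq_eq_exp hz hz0 hN).symm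
  rw [add_comm, Complex.Gamma_add_one z hz0,
    tendsto_nhds_unique ((Complex.GammaSeq_tendsto_Gamma z).const_mul z) hlim,
    ← Complex.exp_neg, neg_neg]

theorem iteratedDeriv_three_one_div_Gamma_one :
    iteratedDeriv 3 (fun s : ℂ => (Complex.Gamma s)⁻¹) 1 =
      2 * riemannZeta 3
        - (Real.pi : ℂ) ^ 2 / 2 * (Real.eulerMascheroniConstant : ℂ)
        + (Real.eulerMascheroniConstant : ℂ) ^ 3 := by
  have hshift := congrFun
    (iteratedDeriv_comp_const_add 3 (fun s : ℂ => (Complex.Gamma s)⁻¹) 1) 0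
  simp only [add_zero] at hshift
  set c : ℂ := (Real.eulerMascheroniConstant : ℂ)
  have hlin : ∀ z : ℂ, HasDerivAt (fun z : ℂ => c * z) c z := fun z => by
    simpa using (hasDerivAt_id z).const_mul c
  have h0 : (0 : ℂ) ∈ Metric.ball (0 : ℂ) (1 / 2) := by simp
  have hd := differentiableOn_weierstrassLog
  have hg1 : ∀ z ∈ Metric.ball (0 : ℂ) (1 / 2),
      deriv (fun z => c * z + weierstrassLog z) z = c + deriv weierstrassLog z := fun z hz =>
    ((hlin z).add (hd.differentiableAt (Metric.isOpen_ball.mem_nhds hz)).hasDerivAt).deriv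
  have hg2 : deriv (deriv fun z => c * z + weierstrassLog z) =ᶠ[𝓝 0]
      deriv (deriv weierstrassLog) := by
    have : deriv (fun z => c * z + weierstrassLog z) =ᶠ[𝓝 0]
        fun z => c + deriv weierstrassLog z :=
      eventually_of_mem (Metric.isOpen_ball.mem_nhds h0) hg1
    simpa using this.deriv
  obtain ⟨e1, e2, e3⟩ := deriv_weierstrassLog_values
  rw [← hshift, iteratedDeriv_three_of_eq_exp Metric.isOpen_ball h0
    (g := fun z => c * z + weierstrassLog z)
    ((differentiable_id.const_mul c).differentiableOn.add hd)
    (fun z hz => inv_Gamma_one_add_eq_exp hz) (by simp [weierstrassLog_zero]),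
    hg1 0 h0, hg2.eq_of_nhds, hg2.deriv_eq, e1, e2, e3, riemannZeta_two]
  ring
end

section
/- There exist ε > 0 and a function h holomorphic on the open disk {s ∈ ℂ : |s| < ε} such that h(0) = c_1 − γ and, for every s in this disk with Re s > 0, Σ_p p^{−(s+1)} = log(1/s) + h(s), where log denotes the principal branch of the complex logarithm and the sum ranges over primes p. -/
/-!
For `Re s > 0` the Euler product gives `ζ(s + 1) = exp S(s)` with
`S(s) = ∑ₚ -log (1 - p^{-(s+1)})`. Subtracting the linear term of each logarithm,
`∑ₚ p^{-(s+1)} = S(s) - R(s)` with `R(s) = ∑ₚ (-log (1 - p^{-(s+1)}) - p^{-(s+1)})`. The terms of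
`R` are `O(p^{-2(Re s + 1)})`, so `R` is holomorphic on `Re s > -1/4`
(`differentiableOn_logRemainder`), and `R(0)` is the real sum that defines Mertens' constant.

Near `0` the function `s ζ(s + 1)` extends to the holomorphic function `riemannZeta₁ (s + 1)`, which
has the value `1` at `0`, so its principal logarithm is holomorphic on a small disk, and
`h(s) = log (riemannZeta₁ (s + 1)) - R(s)` is the required function once
`S(s) = log (1/s) + log (riemannZeta₁ (s + 1))` is known on the right half of the disk. Both sides
have the same exponential, hence the same derivative; the half disk is convex, so they differ by a
constant, and the constant is `0` because at a positive real point both sides are real.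
-/

open Complex

/-- Mertens' constant `c₁ = γ - ∑ₚ (log(1/(1-1/p)) - 1/p)`. -/
noncomputable def mertensC1 : ℝ :=
  Real.eulerMascheroniConstant -
    ∑' p : Nat.Primes, (Real.log (1 / (1 - 1 / (p : ℝ))) - 1 / (p : ℝ))

open Filter Topology

/-- The logarithm of the Euler product for `ζ(s + 1)`, for `Re s > 0`. -/
noncomputable def logEuler (s : ℂ) : ℂ :=
  ∑' p : Nat.Primes, -Complex.log (1 - ((p : ℕ) : ℂ) ^ (-(s + 1)))

/-- The part of `logEuler` coming from the terms of order at least two in `p^{-(s+1)}`; it converges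
for `Re s > -1/2`. -/
noncomputable def logRemainder (s : ℂ) : ℂ :=
  ∑' p : Nat.Primes, (-Complex.log (1 - ((p : ℕ) : ℂ) ^ (-(s + 1))) - ((p : ℕ) : ℂ) ^ (-(s + 1)))

lemma norm_prime_cpow (p : Nat.Primes) (s : ℂ) :
    ‖((p : ℕ) : ℂ) ^ (-(s + 1))‖ = ((p : ℕ) : ℝ) ^ (-(s.re + 1)) := by
  rw [Complex.norm_natCast_cpow_of_pos p.2.pos]
  simp

lemma norm_prime_cpow_le (p : Nat.Primes) {s : ℂ} {a : ℝ} (hs : a ≤ s.re) :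
    ‖((p : ℕ) : ℂ) ^ (-(s + 1))‖ ≤ ((p : ℕ) : ℝ) ^ (-(a + 1)) := by
  rw [norm_prime_cpow]
  exact Real.rpow_le_rpow_of_exponent_le (by exact_mod_cast p.2.one_lt.le) (by linarith)

lemma norm_prime_cpow_lt_one (p : Nat.Primes) {s : ℂ} (hs : -1 < s.re) :
    ‖((p : ℕ) : ℂ) ^ (-(s + 1))‖ < 1 := by
  rw [norm_prime_cpow]
  exact Real.rpow_lt_one_of_one_lt_of_neg (by exact_mod_cast p.2.one_lt) (by linarith)

lemma one_sub_prime_cpow_mem_slitPlane (p : Nat.Primes) {s : ℂ} (hs : -1 < s.re) :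
    1 - ((p : ℕ) : ℂ) ^ (-(s + 1)) ∈ slitPlane := by
  rw [sub_eq_add_neg]
  exact mem_slitPlane_of_norm_lt_one (by rw [norm_neg]; exact norm_prime_cpow_lt_one p hs)

lemma differentiableAt_prime_cpow (p : Nat.Primes) (s : ℂ) :
    DifferentiableAt ℂ (fun s : ℂ => ((p : ℕ) : ℂ) ^ (-(s + 1))) s := by
  have hp : ((p : ℕ) : ℂ) ≠ 0 := by exact_mod_cast p.2.ne_zero
  exact DifferentiableAt.const_cpow (by fun_prop) (Or.inl hp)

/-- A summable majorant, uniform in `Re s > -1/4`, for the terms of `logRemainder`. -/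
lemma norm_logRemainder_term_le (p : Nat.Primes) {s : ℂ} (hs : -(1 / 4) < s.re) :
    ‖-Complex.log (1 - ((p : ℕ) : ℂ) ^ (-(s + 1))) - ((p : ℕ) : ℂ) ^ (-(s + 1))‖ ≤
      ((p : ℕ) : ℝ) ^ (-(3 / 2) : ℝ) * ((1 - (2 : ℝ) ^ (-(3 / 4) : ℝ))⁻¹ / 2) := by
  have h1 := norm_prime_cpow_lt_one p (s := s) (by linarith)
  have hle := norm_prime_cpow_le p hs.le
  rw [show -(-(1 / 4 : ℝ) + 1) = -(3 / 4) by norm_num] at hle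
  set z := ((p : ℕ) : ℂ) ^ (-(s + 1))
  have hsq : ‖z‖ ^ 2 ≤ ((p : ℕ) : ℝ) ^ (-(3 / 2) : ℝ) := by
    calc ‖z‖ ^ 2 ≤ (((p : ℕ) : ℝ) ^ (-(3 / 4) : ℝ)) ^ 2 := by
          gcongr
      _ = _ := by
          rw [← Real.rpow_natCast, ← Real.rpow_mul (by positivity)]
          norm_num
  have h2 : ‖z‖ ≤ (2 : ℝ) ^ (-(3 / 4) : ℝ) := by
    refine hle.trans ?_
    exact Real.rpow_le_rpow_of_nonpos (by norm_num) (by exact_mod_cast p.2.two_le) (by norm_num)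
  have h3 : (2 : ℝ) ^ (-(3 / 4) : ℝ) < 1 :=
    Real.rpow_lt_one_of_one_lt_of_neg (by norm_num) (by norm_num)
  have hb := norm_log_one_add_sub_self_le (z := -z) (by rwa [norm_neg])
  rw [norm_neg, ← sub_eq_add_neg] at hb
  have he : -Complex.log (1 - z) - z = -(Complex.log (1 - z) - -z) := by ring
  rw [he, norm_neg]
  refine hb.trans ?_
  rw [mul_div_assoc]
  have h4 : 0 < 1 - (2 : ℝ) ^ (-(3 / 4) : ℝ) := by linarith
  have h5 : (1 - ‖z‖)⁻¹ ≤ (1 - (2 : ℝ) ^ (-(3 / 4) : ℝ))⁻¹ := inv_anti₀ h4 (by linarith)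
  have h6 : 0 ≤ (1 - ‖z‖)⁻¹ := inv_nonneg.2 (by linarith)
  gcongr

lemma summable_majorant : Summable (fun p : Nat.Primes =>
    ((p : ℕ) : ℝ) ^ (-(3 / 2) : ℝ) * ((1 - (2 : ℝ) ^ (-(3 / 4) : ℝ))⁻¹ / 2)) :=
  (Nat.Primes.summable_rpow.2 (by norm_num)).mul_right _

lemma differentiableOn_logRemainder :
    DifferentiableOn ℂ logRemainder {s : ℂ | -(1 / 4) < s.re} := by
  refine differentiableOn_tsum_of_summable_norm summable_majorant (fun p s hs => ?_)
    (isOpen_re_gt _) (fun p s hs => norm_logRemainder_term_le p hs)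
  have hs' : -(1 / 4) < s.re := hs
  have h := differentiableAt_prime_cpow p s
  exact ((((differentiableAt_const 1).sub h).clog
    (one_sub_prime_cpow_mem_slitPlane p (by linarith))).neg.sub h).differentiableWithinAt

lemma summable_prime_cpow {s : ℂ} (hs : 0 < s.re) :
    Summable (fun p : Nat.Primes => ((p : ℕ) : ℂ) ^ (-(s + 1))) :=
  Summable.of_norm_bounded (Nat.Primes.summable_rpow.2 (by linarith : -(s.re + 1) < -1))
    (fun p => norm_prime_cpow_le p le_rfl)

lemma summable_logRemainder {s : ℂ} (hs : -(1 / 4) < s.re) :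
    Summable (fun p : Nat.Primes =>
      -Complex.log (1 - ((p : ℕ) : ℂ) ^ (-(s + 1))) - ((p : ℕ) : ℂ) ^ (-(s + 1))) :=
  Summable.of_norm_bounded summable_majorant (fun p => norm_logRemainder_term_le p hs)

lemma logEuler_eq {s : ℂ} (hs : 0 < s.re) :
    logEuler s = logRemainder s + ∑' p : Nat.Primes, ((p : ℕ) : ℂ) ^ (-(s + 1)) := by
  rw [logRemainder, ← (summable_logRemainder (by linarith)).tsum_add (summable_prime_cpow hs)]
  simp [logEuler]

lemma differentiableAt_logEuler {s : ℂ} (hs : 0 < s.re) : DifferentiableAt ℂ logEuler s := by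
  have hP : DifferentiableOn ℂ (fun s : ℂ => ∑' p : Nat.Primes, ((p : ℕ) : ℂ) ^ (-(s + 1)))
      {z : ℂ | s.re / 2 < z.re} :=
    differentiableOn_tsum_of_summable_norm
      (Nat.Primes.summable_rpow.2 (by linarith : -(s.re / 2 + 1) < -1))
      (fun p z _ => (differentiableAt_prime_cpow p z).differentiableWithinAt)
      (isOpen_re_gt _) (fun p z hz => norm_prime_cpow_le p (le_of_lt hz))
  have h1 := hP.differentiableAt ((isOpen_re_gt _).mem_nhds (show s.re / 2 < s.re by linarith))
  have h2 := differentiableOn_logRemainder.differentiableAt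
    ((isOpen_re_gt _).mem_nhds (show -(1 / 4) < s.re by linarith))
  refine (h2.add h1).congr_of_eventuallyEq ?_
  filter_upwards [(isOpen_re_gt 0).mem_nhds hs] with z hz using logEuler_eq hz

lemma exp_logEuler {s : ℂ} (hs : 0 < s.re) :
    Complex.exp (logEuler s) = s⁻¹ * riemannZeta₁ (s + 1) := by
  have hs0 : s ≠ 0 := by rintro rfl; simp at hs
  have := riemannZeta_eulerProduct_exp_log (s := s + 1) (by simpa using hs)
  rw [logEuler, this, riemannZeta_eq_inv_sub_mul (by simpa using hs0)]
  simp

lemma prime_cpow_ofReal (p : Nat.Primes) (x : ℝ) :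
    ((p : ℕ) : ℂ) ^ (-((x : ℂ) + 1)) = ((((p : ℕ) : ℝ) ^ (-(x + 1)) : ℝ) : ℂ) := by
  rw [Complex.ofReal_cpow (by positivity)]
  simp

lemma neg_log_one_sub_prime_cpow_ofReal (p : Nat.Primes) {x : ℝ} (hx : -1 < x) :
    -Complex.log (1 - ((p : ℕ) : ℂ) ^ (-((x : ℂ) + 1))) =
      ((-Real.log (1 - ((p : ℕ) : ℝ) ^ (-(x + 1))) : ℝ) : ℂ) := by
  have h : ((p : ℕ) : ℝ) ^ (-(x + 1)) < 1 :=
    Real.rpow_lt_one_of_one_lt_of_neg (by exact_mod_cast p.2.one_lt) (by linarith)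
  rw [prime_cpow_ofReal, Complex.ofReal_neg, Complex.ofReal_log (by linarith)]
  simp

lemma logEuler_ofReal {x : ℝ} (hx : -1 < x) : ∃ y : ℝ, logEuler x = y := by
  refine ⟨∑' p : Nat.Primes, -Real.log (1 - ((p : ℕ) : ℝ) ^ (-(x + 1))), ?_⟩
  rw [Complex.ofReal_tsum]
  exact tsum_congr fun p => neg_log_one_sub_prime_cpow_ofReal p hx

lemma logRemainder_zero : logRemainder 0 =
    ((∑' p : Nat.Primes, (Real.log (1 / (1 - 1 / (p : ℝ))) - 1 / (p : ℝ)) : ℝ) : ℂ) := by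
  rw [Complex.ofReal_tsum]
  refine tsum_congr fun p => ?_
  have h1 := neg_log_one_sub_prime_cpow_ofReal p (x := 0) (by norm_num)
  have h2 := prime_cpow_ofReal p 0
  rw [Complex.ofReal_zero] at h1 h2
  rw [h1, h2, ← Complex.ofReal_sub, zero_add, Real.rpow_neg_one, one_div, one_div, Real.log_inv]

/-- At a positive real point every term is real, so no multiple of `2πi` intervenes. -/
lemma logEuler_eq_log_ofReal {x : ℝ} (hx : 0 < x) :
    logEuler x = Complex.log (1 / x) + Complex.log (riemannZeta₁ (x + 1)) := by
  obtain ⟨y, hy⟩ := logEuler_ofReal (x := x) (by linarith)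
  have hx0 : (x : ℂ) ≠ 0 := by exact_mod_cast hx.ne'
  have he := exp_logEuler (s := x) (by simpa using hx)
  have hz : riemannZeta₁ (x + 1) = ((x * Real.exp y : ℝ) : ℂ) := by
    rw [hy] at he
    push_cast
    rw [he]
    field_simp
  have hi : (1 / x : ℂ) = ((x⁻¹ : ℝ) : ℂ) := by push_cast; simp
  rw [hz, hi, ← Complex.ofReal_log (by positivity), ← Complex.ofReal_log (by positivity), hy,
    Real.log_mul hx.ne' (Real.exp_pos _).ne', Real.log_exp, Real.log_inv]
  push_cast
  ring

lemma logEuler_eq_log {ε : ℝ} (hε : 0 < ε)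
    (hslit : ∀ s ∈ Metric.ball (0 : ℂ) ε, riemannZeta₁ (s + 1) ∈ slitPlane)
    {s : ℂ} (hs : s ∈ Metric.ball (0 : ℂ) ε) (hre : 0 < s.re) :
    logEuler s = Complex.log (1 / s) + Complex.log (riemannZeta₁ (s + 1)) := by
  set U : Set ℂ := Metric.ball (0 : ℂ) ε ∩ {s : ℂ | 0 < s.re} with hU
  have hUo : IsOpen U := Metric.isOpen_ball.inter (isOpen_re_gt 0)
  have hUc : Convex ℝ U := (convex_ball _ _).inter (convex_halfSpace_re_gt 0)
  set D : ℂ → ℂ := fun s =>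
    Complex.log (1 / s) + Complex.log (riemannZeta₁ (s + 1)) - logEuler s with hD
  have hne : ∀ z ∈ U, z ≠ 0 := by
    rintro z hz rfl
    simpa using hz.2
  have hdiff : ∀ z ∈ U, DifferentiableAt ℂ D z := by
    intro z hz
    have hz0 := hne z hz
    have hinv : 1 / z ∈ slitPlane := by
      rw [one_div]
      refine Or.inl ?_
      rw [Complex.inv_re]
      exact div_pos hz.2 (Complex.normSq_pos.2 hz0)
    have h1 : DifferentiableAt ℂ (fun s : ℂ => 1 / s) z := by fun_prop (disch := exact hz0)
    have h2 : DifferentiableAt ℂ (fun s : ℂ => riemannZeta₁ (s + 1)) z :=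
      (differentiable_riemannZeta₁.comp (differentiable_id.add_const 1)) z
    exact ((h1.clog hinv).add (h2.clog (hslit z hz.1))).sub (differentiableAt_logEuler hz.2)
  have hexp : ∀ z ∈ U, Complex.exp (D z) = 1 := by
    intro z hz
    have hz0 := hne z hz
    have hz1 := slitPlane_ne_zero (hslit z hz.1)
    simp only [hD]
    rw [Complex.exp_sub, Complex.exp_add, Complex.exp_log (one_div_ne_zero hz0),
      Complex.exp_log hz1, exp_logEuler hz.2, one_div]
    exact div_self (mul_ne_zero (inv_ne_zero hz0) hz1)
  -- Differentiating `exp ∘ D = 1` gives `D' = 0`.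
  have hderiv : U.EqOn (deriv D) 0 := by
    intro z hz
    have h1 := (hdiff z hz).hasDerivAt.cexp
    have h2 : HasDerivAt (fun w => Complex.exp (D w)) 0 z :=
      (hasDerivAt_const z (1 : ℂ)).congr_of_eventuallyEq
        (by filter_upwards [hUo.mem_nhds hz] with w hw using hexp w hw)
    have h3 := h1.unique h2
    rw [hexp z hz, one_mul] at h3
    exact h3
  have hx : ((ε / 2 : ℝ) : ℂ) ∈ U := by
    refine ⟨?_, ?_⟩
    · rw [mem_ball_zero_iff, Complex.norm_real, Real.norm_of_nonneg (by positivity)]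
      linarith
    · change 0 < ((ε / 2 : ℝ) : ℂ).re
      rw [Complex.ofReal_re]
      positivity
  have hc := hUo.is_const_of_deriv_eq_zero hUc.isPreconnected
    (fun z hz => (hdiff z hz).differentiableWithinAt) hderiv (show s ∈ U from ⟨hs, hre⟩) hx
  have h0 : D ((ε / 2 : ℝ) : ℂ) = 0 := by
    simp only [hD]
    rw [logEuler_eq_log_ofReal (by positivity), sub_self]
  rw [h0] at hc
  exact (sub_eq_zero.1 hc).symm

theorem primeZeta_near_one :
    ∃ ε > (0 : ℝ), ∃ h : ℂ → ℂ,
      DifferentiableOn ℂ h (Metric.ball (0 : ℂ) ε) ∧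
      h 0 = (mertensC1 : ℂ) - (Real.eulerMascheroniConstant : ℂ) ∧
      ∀ s ∈ Metric.ball (0 : ℂ) ε, 0 < s.re →
        (∑' p : Nat.Primes, ((p : ℕ) : ℂ) ^ (-(s + 1))) =
          Complex.log (1 / s) + h s := by
  have hZ : Differentiable ℂ (fun s : ℂ => riemannZeta₁ (s + 1)) :=
    differentiable_riemannZeta₁.comp (differentiable_id.add_const 1)
  have hnhds : ∀ᶠ s in 𝓝 (0 : ℂ), riemannZeta₁ (s + 1) ∈ slitPlane :=
    hZ.continuous.continuousAt.eventually_mem (isOpen_slitPlane.mem_nhds (by simp))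
  obtain ⟨δ, hδ, hball⟩ := Metric.eventually_nhds_iff_ball.1 hnhds
  have hslit : ∀ s ∈ Metric.ball (0 : ℂ) (min δ (1 / 4)), riemannZeta₁ (s + 1) ∈ slitPlane :=
    fun s hs => hball s (Metric.ball_subset_ball (min_le_left _ _) hs)
  have hre : Metric.ball (0 : ℂ) (min δ (1 / 4)) ⊆ {s : ℂ | -(1 / 4) < s.re} := by
    intro s hs
    have h1 : ‖s‖ < 1 / 4 := (mem_ball_zero_iff.1 hs).trans_le (min_le_right _ _)
    exact (abs_lt.1 ((Complex.abs_re_le_norm s).trans_lt h1)).1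
  refine ⟨min δ (1 / 4), by positivity,
    fun s => Complex.log (riemannZeta₁ (s + 1)) - logRemainder s, ?_, ?_, ?_⟩
  · exact (hZ.differentiableOn.clog hslit).sub (differentiableOn_logRemainder.mono hre)
  · simp [logRemainder_zero, mertensC1]
  · intro s hs hs0
    have h1 := logEuler_eq_log (by positivity) hslit hs hs0
    rw [logEuler_eq hs0] at h1
    linear_combination h1
end
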